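/- Let a = (a_1,…,a_{p−1}) and b = (b_1,…,b_p) be vectors of positive reals, and suppose for some index j ∈ {1,…,p}: b_j ≥ 1, a_i > (b_j+1)/2 for every i = 1,…,p−1, and b_{[j]} is weakly supermajorized by a (both of length p−1). Then for every x > 0: |p−1Fp(a;b;−x)| ≤ x^{(1−b_j)/2} · (∏_{i=1}^p Γ(b_i)) · (∏_{i=1}^{p−1} Γ(a_i−(b_j−1)/2)) / ( (∏_{i≠j} Γ(b_i−(b_j−1)/2)) · ∏_{i=1}^{p−1} Γ(a_i) ). -/

import Mathlib

/-!
Write `β = b_j` and `σ = (β - 1) / 2`. The function `p-1Fp(a;b;-x)` arises from `0F1(;β;-x)` by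
multiplying the `k`-th Taylor coefficient by `φ(k)`, where
`φ(s) = ∏ Γ(a_i + s) Γ(b_i) / (Γ(b_i + s) Γ(a_i))` (product over the entries of `a` and `b_[j]`).
The proof has two halves.

*Multipliers.* Morally `φ(s) = ∫ t^s dμ(t)` for a positive measure `μ` on `[0, 1]`, so that
multiplication of the coefficients by `φ` is the average `∫ f(x t) dμ(t)`, and a bound
`|f(x)| ≤ M x^(-σ)` becomes `M φ(-σ) x^(-σ)`. This last property is what `IsMellinMultiplier`
records; the measure itself is never constructed. The property holds for `s ↦ 1 / (s + a)` with
`a > σ` (`∫₀¹ t^(a-1) f(x t) dt`) and is stable under nonnegative combinations, products and limits.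
A transfer `(u, v) ↦ (u + δ, v - δ)` with `0 ≤ δ ≤ v - u` gives the ratio
`1 + δ (v - u - δ) / ((s + u) (s + v))`, and raising one coordinate gives
`1 + (v - u) / (s + u)`; since weak supermajorization is a finite chain of such moves,
`∏ (s + b_i) / (s + a_i)` is a multiplier (`isMellinMultiplier_rational`). Applying this to the
shifts `a + n`, `b + n` and using the Euler product for `Γ` yields `φ`
(`isMellinMultiplier_gamma`).

*Bessel functions.* It remains to see that `|0F1(;ν+1;-x)| ≤ Γ(ν+1) x^(-ν/2)` for `ν ≥ 0`,
that is `|J_ν| ≤ 1`. For integers `ν` the value `J_ν` is a Fourier coefficient of the unimodular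
function `exp(2 i u sin θ)`. The identity
`0F1(;β;z)² = 1F2(β - 1/2; β, 2β - 1; 4z)` together with the multiplier
`Γ(ν + 1/2 + s) / Γ(ν + 1 + s)` and the duplication formula gives `sup |J_ν|² ≤ sup |J_2ν|`, so
the bound descends to dyadic rationals, and continuity in `ν` gives all `ν ≥ 0` (`besselBound`).
-/

/-- Rising factorial (Pochhammer symbol) `(x)_k = x(x+1)⋯(x+k-1)` for real `x`. -/
noncomputable def risingFactorial (x : ℝ) (k : ℕ) : ℝ := ∏ i ∈ Finset.range k, (x + (i : ℝ))

/-- The generalized hypergeometric function `pFq(a;b;z)` defined by its power series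
(which converges for every `z` when `p ≤ q`). -/
noncomputable def pFq {p q : ℕ} (a : Fin p → ℝ) (b : Fin q → ℝ) (z : ℝ) : ℝ :=
  ∑' k : ℕ,
    (∏ i, risingFactorial (a i) k) /
      ((∏ j, risingFactorial (b j) k) * (k.factorial : ℝ)) * z ^ k

/-- `WeaklySupermajorizedBy v u` expresses `v ≺^W u` ("`v` is weakly supermajorized by
`u`"): all entries of `u` and `v` are positive, and for every pair of permutations
arranging `u` and `v` in increasing order, each initial partial sum of the increasing
rearrangement of `u` is at most the corresponding partial sum for `v`. -/
def WeaklySupermajorizedBy {r : ℕ} (v u : Fin r → ℝ) : Prop :=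
  (∀ i, 0 < u i) ∧ (∀ i, 0 < v i) ∧
  ∀ σ τ : Equiv.Perm (Fin r), Monotone (u ∘ σ) → Monotone (v ∘ τ) →
    ∀ k : Fin r,
      ∑ i ∈ Finset.univ.filter (· ≤ k), u (σ i) ≤
        ∑ i ∈ Finset.univ.filter (· ≤ k), v (τ i)

/-! ### Mellin multipliers -/

/-- `φ` acts on power series like `f ↦ ∫ f(x t) dμ(t)` for a positive measure `μ` on `[0, 1]` with
Mellin transform `φ(s) = ∫ t^s dμ(t)`, as far as the decay rate `x^(-σ)` is concerned. Only the
values of `φ` at the natural numbers and at `-σ` matter; `bound` is required for all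
coefficient sequences with infinite radius of convergence. -/
structure IsMellinMultiplier (σ : ℝ) (φ : ℝ → ℝ) : Prop where
  nonneg : ∀ k : ℕ, 0 ≤ φ k
  le_zero : ∀ k : ℕ, φ k ≤ φ 0
  bound : ∀ c : ℕ → ℝ, (∀ x : ℝ, 0 ≤ x → Summable fun k => |c k| * x ^ k) →
    ∀ M : ℝ, (∀ x : ℝ, 0 < x → |∑' k, c k * x ^ k| ≤ M * x ^ (-σ)) →
    ∀ x : ℝ, 0 < x → |∑' k : ℕ, c k * φ k * x ^ k| ≤ M * φ (-σ) * x ^ (-σ)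

namespace IsMellinMultiplier

variable {σ : ℝ} {φ ψ : ℝ → ℝ}

lemma summable_mul (h0 : ∀ k : ℕ, 0 ≤ φ k) (h1 : ∀ k : ℕ, φ k ≤ φ 0) {c : ℕ → ℝ}
    (hc : ∀ x : ℝ, 0 ≤ x → Summable fun k => |c k| * x ^ k) :
    ∀ x : ℝ, 0 ≤ x → Summable fun k : ℕ => |c k * φ k| * x ^ k := by
  intro x hx
  refine Summable.of_nonneg_of_le (fun k => by positivity) (fun k => ?_)
    ((hc x hx).mul_left (φ 0))
  rw [abs_mul, abs_of_nonneg (h0 k)]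
  have h2 : 0 ≤ |c k| * x ^ k := by positivity
  nlinarith [mul_le_mul_of_nonneg_right (h1 k) h2]

lemma summable_of_abs {c : ℕ → ℝ}
    (hc : ∀ x : ℝ, 0 ≤ x → Summable fun k => |c k| * x ^ k) {x : ℝ} (hx : 0 ≤ x) :
    Summable fun k => c k * x ^ k := by
  refine Summable.of_norm ?_
  simpa [abs_mul, abs_of_nonneg hx] using hc x hx

lemma congr (h : IsMellinMultiplier σ φ) (hn : ∀ k : ℕ, φ k = ψ k) (hσ : φ (-σ) = ψ (-σ)) :
    IsMellinMultiplier σ ψ := by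
  have h0 : φ 0 = ψ 0 := by simpa using hn 0
  refine ⟨fun k => hn k ▸ h.nonneg k, fun k => ?_, fun c hc M hM x hx => ?_⟩
  · rw [← hn, ← h0]; exact h.le_zero k
  · have := h.bound c hc M hM x hx
    simpa only [hn, hσ] using this

lemma one : IsMellinMultiplier σ (fun _ => 1) :=
  ⟨fun _ => zero_le_one, fun _ => le_rfl, fun c _ M hM x hx => by simpa using hM x hx⟩

lemma mul (h : IsMellinMultiplier σ φ) (h' : IsMellinMultiplier σ ψ) :
    IsMellinMultiplier σ (fun s => φ s * ψ s) := by
  refine ⟨fun k => mul_nonneg (h.nonneg k) (h'.nonneg k), fun k =>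
    mul_le_mul (h.le_zero k) (h'.le_zero k) (h'.nonneg k) ?_, fun c hc M hM x hx => ?_⟩
  · simpa using h.nonneg 0
  · have := h'.bound (fun k => c k * φ k) (summable_mul h.nonneg h.le_zero hc) _
      (fun y hy => h.bound c hc M hM y hy) x hx
    simpa only [mul_assoc] using this

lemma smul (h : IsMellinMultiplier σ φ) {r : ℝ} (hr : 0 ≤ r) :
    IsMellinMultiplier σ (fun s => r * φ s) := by
  refine ⟨fun k => mul_nonneg hr (h.nonneg k), fun k =>
    mul_le_mul_of_nonneg_left (h.le_zero k) hr, fun c hc M hM x hx => ?_⟩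
  have := h.bound c hc M hM x hx
  have e : ∑' k : ℕ, c k * (r * φ k) * x ^ k = r * ∑' k : ℕ, c k * φ k * x ^ k := by
    rw [← tsum_mul_left]; congr 1; ext k; ring
  rw [e, abs_mul, abs_of_nonneg hr]
  calc _ ≤ r * (M * φ (-σ) * x ^ (-σ)) := mul_le_mul_of_nonneg_left this hr
    _ = _ := by ring

lemma add (h : IsMellinMultiplier σ φ) (h' : IsMellinMultiplier σ ψ) :
    IsMellinMultiplier σ (fun s => φ s + ψ s) := by
  refine ⟨fun k => add_nonneg (h.nonneg k) (h'.nonneg k), fun k =>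
    add_le_add (h.le_zero k) (h'.le_zero k), fun c hc M hM x hx => ?_⟩
  have e : ∑' k : ℕ, c k * (φ k + ψ k) * x ^ k
      = (∑' k : ℕ, c k * φ k * x ^ k) + ∑' k : ℕ, c k * ψ k * x ^ k := by
    rw [← Summable.tsum_add
      (summable_of_abs (summable_mul h.nonneg h.le_zero hc) hx.le)
      (summable_of_abs (summable_mul h'.nonneg h'.le_zero hc) hx.le)]
    congr 1; ext k; ring
  rw [e]
  calc _ ≤ _ := abs_add_le _ _
    _ ≤ _ := add_le_add (h.bound c hc M hM x hx) (h'.bound c hc M hM x hx)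
    _ = _ := by ring

lemma prod {ι : Type*} (s : Finset ι) {f : ι → ℝ → ℝ}
    (h : ∀ i ∈ s, IsMellinMultiplier σ (f i)) :
    IsMellinMultiplier σ (fun t => ∏ i ∈ s, f i t) := by
  classical
  induction s using Finset.induction_on with
  | empty => simpa using one
  | insert i s hi ih =>
    simp only [Finset.prod_insert hi]
    exact (h i (by simp)).mul (ih fun j hj => h j (by simp [hj]))

/-- A pointwise limit of multipliers normalized by `f N 0 ≤ 1` is a multiplier: the normalization
bounds all `f N k` and allows passing to the limit in the series. -/
lemma of_tendsto {f : ℕ → ℝ → ℝ} (h : ∀ N, IsMellinMultiplier σ (f N))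
    (h1 : ∀ N, f N 0 ≤ 1)
    (hn : ∀ k : ℕ, Filter.Tendsto (fun N => f N k) Filter.atTop (nhds (φ k)))
    (hσ : Filter.Tendsto (fun N => f N (-σ)) Filter.atTop (nhds (φ (-σ)))) :
    IsMellinMultiplier σ φ := by
  have hn0 : Filter.Tendsto (fun N => f N 0) Filter.atTop (nhds (φ 0)) := by
    simpa using hn 0
  refine ⟨fun k => ge_of_tendsto' (hn k) fun N => (h N).nonneg k, fun k =>
    le_of_tendsto_of_tendsto' (hn k) hn0 fun N => (h N).le_zero k, fun c hc M hM x hx => ?_⟩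
  have ht : Filter.Tendsto (fun N => ∑' k : ℕ, c k * f N k * x ^ k) Filter.atTop
      (nhds (∑' k : ℕ, c k * φ k * x ^ k)) := by
    refine tendsto_tsum_of_dominated_convergence (hc x hx.le)
      (fun k => ((hn k).const_mul _).mul_const _) (Filter.Eventually.of_forall fun N k => ?_)
    have h2 : 0 ≤ |c k| * x ^ k := by positivity
    rw [Real.norm_eq_abs, abs_mul, abs_mul, abs_of_nonneg ((h N).nonneg k),
      abs_of_nonneg (by positivity : 0 ≤ x ^ k)]
    nlinarith [mul_le_mul_of_nonneg_right (((h N).le_zero k).trans (h1 N)) h2]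
  exact le_of_tendsto_of_tendsto' ht.abs ((hσ.const_mul M).mul_const _)
    fun N => (h N).bound c hc M hM x hx

/-- The multiplier `1 / (s + a)` is the averaging `f ↦ ∫₀¹ t^(a-1) f(x t) dt`. -/
lemma inv_add {a : ℝ} (hσ : 0 ≤ σ) (ha : σ < a) :
    IsMellinMultiplier σ (fun s => 1 / (s + a)) := by
  have ha0 : 0 < a := hσ.trans_lt ha
  refine ⟨fun k => by positivity, fun k => ?_, fun c hc M hM x hx => ?_⟩
  · exact one_div_le_one_div_of_le (by linarith)
      (by have : (0:ℝ) ≤ k := k.cast_nonneg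
          linarith)
  have hint : ∀ k : ℕ, IntervalIntegrable (fun t : ℝ => t ^ ((k : ℝ) + (a - 1)))
      MeasureTheory.volume 0 1 := fun k =>
    intervalIntegral.intervalIntegrable_rpow' (by
      have : (0:ℝ) ≤ k := k.cast_nonneg
      linarith)
  have hval : ∀ k : ℕ, ∫ t in (0:ℝ)..1, t ^ ((k : ℝ) + (a - 1)) = 1 / (k + a) := by
    intro k
    have : (0:ℝ) ≤ k := k.cast_nonneg
    rw [integral_rpow (Or.inl (by linarith))]
    rw [Real.one_rpow, Real.zero_rpow (by linarith)]
    congr 1 <;> ring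
  have hsum : HasSum (fun k : ℕ => ∫ t in (0:ℝ)..1, c k * x ^ k * t ^ ((k : ℝ) + (a - 1)))
      (∫ t in (0:ℝ)..1, ∑' k : ℕ, c k * x ^ k * t ^ ((k : ℝ) + (a - 1))) := by
    simp only [intervalIntegral.integral_of_le zero_le_one]
    refine MeasureTheory.hasSum_integral_of_summable_integral_norm
      (fun k => ?_) ?_
    · exact ((hint k).const_mul _).1
    · have : ∀ k : ℕ, ∫ t in Set.Ioc (0:ℝ) 1, ‖c k * x ^ k * t ^ ((k : ℝ) + (a - 1))‖
          = |c k * (1 / (k + a))| * x ^ k := by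
        intro k
        have e : ∫ t in Set.Ioc (0:ℝ) 1, ‖c k * x ^ k * t ^ ((k : ℝ) + (a - 1))‖
          = ∫ t in Set.Ioc (0:ℝ) 1, (|c k| * x ^ k) * t ^ ((k : ℝ) + (a - 1)) := by
          refine MeasureTheory.setIntegral_congr_fun measurableSet_Ioc fun t ht => ?_
          have : 0 ≤ t ^ ((k : ℝ) + (a - 1)) := Real.rpow_nonneg ht.1.le _
          simp only [Real.norm_eq_abs]
          rw [abs_mul, abs_mul, abs_of_nonneg this, abs_of_nonneg (by positivity : 0 ≤ x ^ k)]
        rw [e, MeasureTheory.integral_const_mul, ← intervalIntegral.integral_of_le zero_le_one,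
          hval, abs_mul, abs_of_nonneg (by positivity : 0 ≤ 1 / ((k:ℝ) + a))]
        ring
      simp only [this]
      refine summable_mul (φ := fun s => 1 / (s + a)) (fun k => by positivity) (fun k => ?_) hc x
        hx.le
      exact one_div_le_one_div_of_le (by linarith)
        (by have : (0:ℝ) ≤ k := k.cast_nonneg
            linarith)
  have heq : ∑' k : ℕ, c k * (1 / ((k : ℝ) + a)) * x ^ k
      = ∫ t in (0:ℝ)..1, ∑' k : ℕ, c k * x ^ k * t ^ ((k : ℝ) + (a - 1)) := by
    rw [← hsum.tsum_eq]
    congr 1; ext k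
    rw [intervalIntegral.integral_const_mul, hval]; ring
  rw [heq, ← Real.norm_eq_abs]
  have hg : IntervalIntegrable (fun t : ℝ => M * x ^ (-σ) * t ^ (a - 1 - σ))
      MeasureTheory.volume 0 1 :=
    (intervalIntegral.intervalIntegrable_rpow' (by linarith)).const_mul _
  refine (intervalIntegral.norm_integral_le_of_norm_le zero_le_one
    (MeasureTheory.ae_of_all _ fun t ht => ?_) hg).trans_eq ?_
  · have ht0 : 0 < t := ht.1
    have e : ∑' k : ℕ, c k * x ^ k * t ^ ((k : ℝ) + (a - 1))
        = t ^ (a - 1) * ∑' k : ℕ, c k * (x * t) ^ k := by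
      rw [← tsum_mul_left]; congr 1; ext k
      rw [Real.rpow_add ht0, Real.rpow_natCast, mul_pow]; ring
    have hp : 0 ≤ t ^ (a - 1) := Real.rpow_nonneg ht0.le _
    rw [e, Real.norm_eq_abs, abs_mul, abs_of_nonneg hp]
    calc _ ≤ t ^ (a - 1) * (M * (x * t) ^ (-σ)) :=
          mul_le_mul_of_nonneg_left (hM _ (mul_pos hx ht0)) hp
      _ = _ := by
          rw [Real.mul_rpow hx.le ht0.le, sub_eq_add_neg (a - 1) σ, Real.rpow_add ht0]; ring
  · rw [intervalIntegral.integral_const_mul, integral_rpow (Or.inl (by linarith)),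
      Real.one_rpow, Real.zero_rpow (by linarith)]
    have : a - 1 - σ + 1 = -σ + a := by ring
    rw [this]; ring

end IsMellinMultiplier

/-! ### Multipliers from weak supermajorization -/

open IsMellinMultiplier in
lemma isMellinMultiplier_shift {σ u v : ℝ} (hσ : 0 ≤ σ) (hu : σ < u) (huv : u ≤ v) :
    IsMellinMultiplier σ (fun s => (s + v) / (s + u)) := by
  refine (one.add ((inv_add hσ hu).smul (sub_nonneg.2 huv))).congr (fun k => ?_) ?_
  · have : (k : ℝ) + u ≠ 0 := by
      have : (0:ℝ) ≤ k := k.cast_nonneg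
      linarith
    field_simp; ring
  · have : -σ + u ≠ 0 := by linarith
    field_simp; ring

open IsMellinMultiplier in
lemma isMellinMultiplier_transfer {σ u v δ : ℝ} (hσ : 0 ≤ σ) (hu : σ < u) (hv : σ < v)
    (hδ : 0 ≤ δ) (huv : δ ≤ v - u) :
    IsMellinMultiplier σ (fun s => (s + (u + δ)) / (s + u) * ((s + (v - δ)) / (s + v))) := by
  have hc : 0 ≤ δ * (v - u - δ) := mul_nonneg hδ (by linarith)
  refine (one.add (((inv_add hσ hu).mul (inv_add hσ hv)).smul hc)).congr (fun k => ?_) ?_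
  · have hk : (0:ℝ) ≤ k := k.cast_nonneg
    have h1 : (k : ℝ) + u ≠ 0 := by linarith
    have h2 : (k : ℝ) + v ≠ 0 := by linarith
    field_simp; ring
  · have h1 : -σ + u ≠ 0 := by linarith
    have h2 : -σ + v ≠ 0 := by linarith
    field_simp; ring

/-- The condition on `a` and `b` is weak supermajorization with `b` sorted; `a` need not be sorted.
The induction is on the number `n` of indices where `a` and `b` differ: as long as some
`a k > b k`, a suitable amount `δ` is transferred from coordinate `k` to an earlier coordinate
`i` with `a i < b i`, which makes one of these two coordinates agree with `b`. -/
lemma isMellinMultiplier_rational {p : ℕ} {σ : ℝ} (hσ : 0 ≤ σ) (b : Fin p → ℝ)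
    (hb : Monotone b) (hbσ : ∀ i, σ < b i) :
    ∀ (n : ℕ) (a : Fin p → ℝ), (Finset.univ.filter fun i => a i ≠ b i).card = n →
      (∀ i, σ < a i) →
      (∀ k, ∑ i ∈ Finset.univ.filter (· ≤ k), a i ≤ ∑ i ∈ Finset.univ.filter (· ≤ k), b i) →
      IsMellinMultiplier σ (fun s => ∏ i, (s + b i) / (s + a i)) := by
  intro n
  induction n using Nat.strong_induction_on with
  | _ n ih =>
  intro a hcard haσ hsum
  by_cases hle : ∀ i, a i ≤ b i
  · exact IsMellinMultiplier.prod _ fun i _ => isMellinMultiplier_shift hσ (haσ i) (hle i)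
  -- `k` is the first index at which `a` exceeds `b`
  obtain ⟨k, hk, hkmin⟩ : ∃ k, b k < a k ∧ ∀ l < k, a l ≤ b l := by
    push Not at hle
    obtain ⟨k, hk, hmin⟩ := WellFounded.has_min (wellFounded_lt (α := Fin p))
      {i | b i < a i} hle
    exact ⟨k, hk, fun l hl => not_lt.1 fun h => hmin l h hl⟩
  -- the partial sum up to `k` forces a strict deficit at some earlier index
  obtain ⟨i, hik, hi⟩ : ∃ i < k, a i < b i := by
    by_contra! hcon
    refine absurd (hsum k) (not_le.2 (Finset.sum_lt_sum (fun l hl => ?_) ⟨k, by simp, hk⟩))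
    rcases (Finset.mem_filter.1 hl).2.lt_or_eq with h | h
    · exact hcon l h
    · rw [h]; exact hk.le
  set δ := min (b i - a i) (a k - b k) with hδ
  have hδ0 : 0 < δ := lt_min (by linarith) (by linarith)
  have hδ1 : δ ≤ b i - a i := min_le_left _ _
  have hδ2 : δ ≤ a k - b k := min_le_right _ _
  have hbik : b i ≤ b k := hb hik.le
  set a' : Fin p → ℝ := fun l => a l + (if l = i then δ else 0) - (if l = k then δ else 0)
    with ha'
  have ha'i : a' i = a i + δ := by simp [ha', hik.ne]
  have ha'k : a' k = a k - δ := by simp [ha', hik.ne']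
  have ha'l : ∀ l, l ≠ i → l ≠ k → a' l = a l := fun l h1 h2 => by simp [ha', h1, h2]
  have ha'σ : ∀ l, σ < a' l := by
    intro l
    by_cases h1 : l = i
    · rw [h1, ha'i]; linarith [haσ i]
    by_cases h2 : l = k
    · rw [h2, ha'k]; linarith [hbσ k]
    rw [ha'l l h1 h2]; exact haσ l
  have hsum' : ∀ m, ∑ l ∈ Finset.univ.filter (· ≤ m), a' l
      ≤ ∑ l ∈ Finset.univ.filter (· ≤ m), b l := by
    intro m
    -- before `k` the inequality holds entrywise; from `k` on the transfer cancels in the sum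
    rcases lt_or_ge m k with hm | hm
    · refine Finset.sum_le_sum fun l hl => ?_
      have hlk : l < k := (Finset.mem_filter.1 hl).2.trans_lt hm
      by_cases h1 : l = i
      · rw [h1, ha'i]; linarith
      · rw [ha'l l h1 hlk.ne]; exact hkmin l hlk
    · refine le_of_eq_of_le ?_ (hsum m)
      simp only [ha', Finset.sum_sub_distrib, Finset.sum_add_distrib, Finset.sum_ite_eq',
        Finset.mem_filter, Finset.mem_univ, true_and, hm, hik.le.trans hm, if_true]
      ring
  have hlt : (Finset.univ.filter fun l => a' l ≠ b l).card < n := by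
    rw [← hcard]
    refine Finset.card_lt_card ⟨fun l hl => ?_, fun hsub => ?_⟩
    · simp only [Finset.mem_filter, Finset.mem_univ, true_and] at hl ⊢
      by_cases h1 : l = i
      · rw [h1]; exact hi.ne
      by_cases h2 : l = k
      · rw [h2]; exact hk.ne'
      rwa [ha'l l h1 h2] at hl
    · have hi' := @hsub i (by simp [hi.ne])
      have hk' := @hsub k (by simp [hk.ne'])
      simp only [Finset.mem_filter, Finset.mem_univ, true_and, ha'i, ha'k] at hi' hk'
      rcases min_choice (b i - a i) (a k - b k) with h | h
      · exact hi' (by rw [hδ, h]; ring)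
      · exact hk' (by rw [hδ, h]; ring)
  have key : ∀ s, -σ ≤ s → (s + (a i + δ)) / (s + a i) * ((s + (a k - δ)) / (s + a k)) *
      ∏ l, (s + b l) / (s + a' l) = ∏ l, (s + b l) / (s + a l) := by
    intro s hs
    have e : (s + (a i + δ)) / (s + a i) * ((s + (a k - δ)) / (s + a k))
        = ∏ l, (s + a' l) / (s + a l) := by
      rw [Fintype.prod_eq_mul i k hik.ne, ha'i, ha'k]
      rintro l ⟨h1, h2⟩
      rw [ha'l l h1 h2]
      exact div_self (by linarith [haσ l])
    rw [e, ← Finset.prod_mul_distrib]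
    refine Finset.prod_congr rfl fun l _ => ?_
    have h1 : s + a l ≠ 0 := by linarith [haσ l]
    have h2 : s + a' l ≠ 0 := by linarith [ha'σ l]
    field_simp
  refine ((isMellinMultiplier_transfer hσ (haσ i) (haσ k) hδ0.le (by linarith)).mul
    (ih _ hlt a' rfl ha'σ hsum')).congr (fun n => key n ?_) (key _ le_rfl)
  have : (0:ℝ) ≤ n := n.cast_nonneg
  linarith

/-- The multiplier property of Gamma quotients, as the limit of the normalized products over
`n ≤ N` of the rational multipliers for `a + n`, `b + n`. -/
lemma isMellinMultiplier_gamma {p : ℕ} {σ : ℝ} (hσ : 0 ≤ σ) (a b : Fin p → ℝ)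
    (hb : Monotone b) (haσ : ∀ i, σ < a i) (hbσ : ∀ i, σ < b i)
    (hsum : ∀ k, ∑ i ∈ Finset.univ.filter (· ≤ k), a i
      ≤ ∑ i ∈ Finset.univ.filter (· ≤ k), b i) :
    IsMellinMultiplier σ (fun s => ∏ i, Real.Gamma (a i + s) * Real.Gamma (b i) /
      (Real.Gamma (b i + s) * Real.Gamma (a i))) := by
  let ψ : ℕ → ℝ → ℝ := fun n s => ∏ i, (s + (b i + n)) / (s + (a i + n))
  have hψ : ∀ n, IsMellinMultiplier σ (ψ n) := fun n => by
    have hn : (0:ℝ) ≤ n := n.cast_nonneg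
    refine isMellinMultiplier_rational hσ (fun i => b i + n) (fun i j h => ?_) (fun i => ?_) _
      (fun i => a i + n) rfl (fun i => ?_) fun k => ?_
    · linarith [hb h]
    · linarith [hbσ i]
    · linarith [haσ i]
    · simp only [Finset.sum_add_distrib]; linarith [hsum k]
  have hψ0 : ∀ n, 0 < ψ n 0 := fun n => Finset.prod_pos fun i _ => by
    have hn : (0:ℝ) ≤ n := n.cast_nonneg
    exact div_pos (by linarith [hbσ i]) (by linarith [haσ i])
  have hlim : ∀ s, -σ ≤ s → Filter.Tendsto
      (fun N : ℕ => ∏ n ∈ Finset.range (N + 1), (ψ n 0)⁻¹ * ψ n s) Filter.atTop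
      (nhds (∏ i, Real.Gamma (a i + s) * Real.Gamma (b i) /
        (Real.Gamma (b i + s) * Real.Gamma (a i)))) := by
    intro s hs
    have ht : Filter.Tendsto (fun N : ℕ => ∏ i, Real.GammaSeq (a i + s) N *
        Real.GammaSeq (b i) N / (Real.GammaSeq (b i + s) N * Real.GammaSeq (a i) N))
        Filter.atTop (nhds (∏ i, Real.Gamma (a i + s) * Real.Gamma (b i) /
        (Real.Gamma (b i + s) * Real.Gamma (a i)))) := by
      refine tendsto_finsetProd _ fun i _ => Filter.Tendsto.div
        ((Real.GammaSeq_tendsto_Gamma _).mul (Real.GammaSeq_tendsto_Gamma _))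
        ((Real.GammaSeq_tendsto_Gamma _).mul (Real.GammaSeq_tendsto_Gamma _)) ?_
      exact (mul_pos (Real.Gamma_pos_of_pos (by linarith [hbσ i]))
        (Real.Gamma_pos_of_pos (by linarith [haσ i]))).ne'
    refine ht.congr' ?_
    filter_upwards [Filter.eventually_gt_atTop 0] with N hN
    have hN' : (0:ℝ) < N := by exact_mod_cast hN
    have e : ∏ n ∈ Finset.range (N + 1), (ψ n 0)⁻¹ * ψ n s = ∏ i : Fin p,
        ∏ n ∈ Finset.range (N + 1),
          (((b i + n) / (a i + n))⁻¹ * ((b i + s + n) / (a i + s + n))) := by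
      rw [Finset.prod_comm]
      refine Finset.prod_congr rfl fun n _ => ?_
      rw [Finset.prod_mul_distrib, Finset.prod_inv_distrib]
      congr 1
      · simp [ψ]
      · exact Finset.prod_congr rfl fun i _ => by congr 1 <;> ring
    rw [e]
    refine Finset.prod_congr rfl fun i _ => ?_
    have hP : ∀ y : ℝ, 0 < y → 0 < ∏ n ∈ Finset.range (N + 1), (y + (n : ℝ)) := fun y hy =>
      Finset.prod_pos fun n _ => by positivity
    have h1 := hP (a i) (by linarith [haσ i])
    have h2 := hP (b i) (by linarith [hbσ i])
    have h3 := hP (a i + s) (by linarith [haσ i])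
    have h4 := hP (b i + s) (by linarith [hbσ i])
    simp only [Finset.prod_mul_distrib, Finset.prod_inv_distrib, Finset.prod_div_distrib,
      Real.GammaSeq, Real.rpow_add hN']
    have hf : (0:ℝ) < N.factorial := by exact_mod_cast N.factorial_pos
    have r1 := Real.rpow_pos_of_pos hN' (a i)
    have r2 := Real.rpow_pos_of_pos hN' (b i)
    have r3 := Real.rpow_pos_of_pos hN' s
    field_simp
  refine IsMellinMultiplier.of_tendsto
    (f := fun N s => ∏ n ∈ Finset.range (N + 1), (ψ n 0)⁻¹ * ψ n s)
    (fun N => IsMellinMultiplier.prod _ fun n _ => (hψ n).smul (inv_nonneg.2 (hψ0 n).le))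
    (fun N => ?_) (fun k => hlim k ?_) (hlim _ le_rfl)
  · exact (Finset.prod_eq_one fun n _ => inv_mul_cancel₀ (hψ0 n).ne').le
  · have : (0:ℝ) ≤ k := k.cast_nonneg
    linarith

/-! ### Rising factorials and the series of `0F1` -/

lemma risingFactorial_pos {x : ℝ} (hx : 0 < x) (k : ℕ) : 0 < risingFactorial x k :=
  Finset.prod_pos fun i _ => by positivity

lemma risingFactorial_succ (x : ℝ) (k : ℕ) :
    risingFactorial x (k + 1) = risingFactorial x k * (x + k) :=
  Finset.prod_range_succ _ _

lemma risingFactorial_add (x : ℝ) (m n : ℕ) :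
    risingFactorial x (m + n) = risingFactorial x m * risingFactorial (x + m) n := by
  simp only [risingFactorial, Finset.prod_range_add]
  congr 1
  exact Finset.prod_congr rfl fun i _ => by push_cast; ring

lemma Gamma_add_nat {x : ℝ} (hx : 0 < x) (k : ℕ) :
    Real.Gamma (x + k) = risingFactorial x k * Real.Gamma x := by
  induction k with
  | zero => simp [risingFactorial]
  | succ k ih =>
    have : x + ((k + 1 : ℕ) : ℝ) = (x + k) + 1 := by push_cast; ring
    rw [this, Real.Gamma_add_one (by positivity), ih, risingFactorial_succ]; ring

lemma Gamma_ratio_nat {u v : ℝ} (hu : 0 < u) (hv : 0 < v) (k : ℕ) :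
    Real.Gamma (u + k) * Real.Gamma v / (Real.Gamma (v + k) * Real.Gamma u)
      = risingFactorial u k / risingFactorial v k := by
  rw [Gamma_add_nat hu, Gamma_add_nat hv]
  have h1 := Real.Gamma_pos_of_pos hu
  have h2 := Real.Gamma_pos_of_pos hv
  have h3 := risingFactorial_pos hv k
  field_simp

lemma ascPochhammer_eval_eq_risingFactorial (x : ℝ) (n : ℕ) :
    (ascPochhammer ℝ n).eval x = risingFactorial x n := by
  induction n with
  | zero => simp [risingFactorial]
  | succ n ih => rw [ascPochhammer_succ_eval, ih, risingFactorial_succ]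

lemma ringChoose_eq (r : ℝ) (n : ℕ) :
    Ring.choose r n = risingFactorial (r - n + 1) n / n.factorial := by
  have h := Ring.descPochhammer_eq_factorial_smul_choose r n
  rw [Polynomial.descPochhammer_smeval_eq_ascPochhammer, Polynomial.ascPochhammer_smeval_eq_eval,
    ascPochhammer_eval_eq_risingFactorial, nsmul_eq_mul] at h
  have hf : (n.factorial : ℝ) ≠ 0 := by exact_mod_cast n.factorial_ne_zero
  rw [eq_div_iff hf, mul_comm, ← h]

lemma risingFactorial_duplication (x : ℝ) (k : ℕ) :
    risingFactorial (2 * x - 1) (k + k)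
      = 4 ^ k * risingFactorial (x - 1 / 2) k * risingFactorial x k := by
  induction k with
  | zero => simp [risingFactorial]
  | succ k ih =>
    have : k + 1 + (k + 1) = k + k + 1 + 1 := by ring
    rw [this, risingFactorial_succ, risingFactorial_succ, ih, risingFactorial_succ,
      risingFactorial_succ, pow_succ]
    push_cast; ring

/-- The `k`-th Taylor coefficient of `0F1(;β;-x)`. -/
noncomputable def besselCoeff (β : ℝ) (k : ℕ) : ℝ :=
  (-1) ^ k / (risingFactorial β k * (k.factorial : ℝ))

lemma abs_besselCoeff_le {β : ℝ} (hβ : 1 ≤ β) (k : ℕ) :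
    |besselCoeff β k| ≤ 1 / (k.factorial : ℝ) := by
  have h1 : 1 ≤ risingFactorial β k := by
    unfold risingFactorial
    refine Finset.one_le_prod fun i _ => ?_
    have : (0:ℝ) ≤ i := i.cast_nonneg
    linarith
  have hf : (0:ℝ) < k.factorial := by exact_mod_cast k.factorial_pos
  rw [besselCoeff, abs_div, abs_pow, abs_neg, abs_one, one_pow, abs_of_pos (by positivity)]
  exact one_div_le_one_div_of_le hf (by nlinarith)

lemma besselCoeff_summable {β : ℝ} (hβ : 1 ≤ β) (x : ℝ) (hx : 0 ≤ x) :
    Summable fun k => |besselCoeff β k| * x ^ k := by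
  refine Summable.of_nonneg_of_le (fun k => by positivity) (fun k => ?_)
    (Real.summable_pow_div_factorial x)
  calc _ ≤ 1 / (k.factorial : ℝ) * x ^ k :=
        mul_le_mul_of_nonneg_right (abs_besselCoeff_le hβ k) (by positivity)
    _ = _ := by ring

/-- Coefficient form of `0F1(;β;z)² = 1F2(β - 1/2; β, 2β - 1; 4z)`. By Chu–Vandermonde the
convolution is a multiple of `Ring.choose (2β + 2k - 2) k`. -/
lemma besselCoeff_antidiagonal {β : ℝ} (hβ : 1 ≤ β) (k : ℕ) :
    ∑ ij ∈ Finset.HasAntidiagonal.antidiagonal k, besselCoeff β ij.1 * besselCoeff β ij.2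
      = besselCoeff (2 * β - 1) k * 4 ^ k *
        (risingFactorial (β - 1 / 2) k / risingFactorial β k) := by
  have hV := Ring.add_choose_eq k (Commute.all (β + k - 1) (β + k - 1))
  have hβk := risingFactorial_pos (by linarith : 0 < β) k
  have h2k := risingFactorial_pos (by linarith : 0 < 2 * β - 1) k
  have hk : (0:ℝ) < k.factorial := by exact_mod_cast k.factorial_pos
  have e : ∑ ij ∈ Finset.HasAntidiagonal.antidiagonal k, besselCoeff β ij.1 * besselCoeff β ij.2
      = (-1) ^ k / risingFactorial β k ^ 2 * Ring.choose (β + k - 1 + (β + k - 1)) k := by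
    rw [hV, Finset.mul_sum]
    refine Finset.sum_congr rfl fun ij hij => ?_
    obtain ⟨i, j⟩ := ij
    have hij : i + j = k := by simpa using hij
    have hij' : (k : ℝ) = i + j := by exact_mod_cast hij.symm
    have hi := risingFactorial_pos (by linarith : 0 < β) i
    have hj := risingFactorial_pos (by linarith : 0 < β) j
    have r1 : risingFactorial β k = risingFactorial β i * risingFactorial (β + i) j := by
      rw [← hij, risingFactorial_add]
    have r2 : risingFactorial β k = risingFactorial β j * risingFactorial (β + j) i := by
      rw [← hij, add_comm, risingFactorial_add]
    have hfi : (0:ℝ) < i.factorial := by exact_mod_cast i.factorial_pos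
    have hfj : (0:ℝ) < j.factorial := by exact_mod_cast j.factorial_pos
    have e1 : β + k - 1 - i + 1 = β + j := by rw [hij']; ring
    have e2 : β + k - 1 - j + 1 = β + i := by rw [hij']; ring
    simp only [besselCoeff, ringChoose_eq, e1, e2]
    rw [← hij, pow_add, hij]
    have hi' : risingFactorial (β + j) i = risingFactorial β k / risingFactorial β j := by
      rw [r2]; field_simp
    have hj' : risingFactorial (β + i) j = risingFactorial β k / risingFactorial β i := by
      rw [r1]; field_simp
    rw [hi', hj']
    field_simp
  rw [e, ringChoose_eq]
  have e3 : β + k - 1 + (β + k - 1) - k + 1 = 2 * β - 1 + k := by ring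
  have e4 := risingFactorial_duplication β k
  rw [risingFactorial_add] at e4
  have e5 : risingFactorial (2 * β - 1 + k) k =
      4 ^ k * risingFactorial (β - 1 / 2) k * risingFactorial β k /
        risingFactorial (2 * β - 1) k := by
    rw [← e4]; field_simp
  rw [e3, e5, besselCoeff]
  field_simp

/-! ### The bound `|J_ν| ≤ 1` -/

/-- The bound `|J_ν(2√x)| ≤ 1` for all `x > 0`, written in terms of
`0F1(;ν+1;-x) = Γ(ν+1) x^(-ν/2) J_ν(2√x)`. -/
def BesselBound (ν : ℝ) : Prop :=
  ∀ x : ℝ, 0 < x → |∑' k, besselCoeff (ν + 1) k * x ^ k|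
    ≤ Real.Gamma (ν + 1) * x ^ (-(ν / 2))

/-- The inequality `sup |J_ν|² ≤ sup |J_2ν|`, an analogue of Neumann's formula
`J_ν(u)² = (2/π) ∫ J_2ν(2u cos θ) dθ`. -/
lemma BesselBound.half {ν : ℝ} (hν : 0 ≤ ν) (h : BesselBound (2 * ν)) : BesselBound ν := by
  have hm := isMellinMultiplier_gamma (p := 1) hν (fun _ => ν + 1 / 2) (fun _ => ν + 1)
    (fun _ _ _ => le_rfl) (fun _ => by linarith) (fun _ => by linarith)
    (fun k => Finset.sum_le_sum fun i _ => by linarith)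
  simp only [Finset.univ_unique, Finset.prod_const, Finset.card_singleton, pow_one] at hm
  intro x hx
  have hβ : 1 ≤ ν + 1 := by linarith
  have hβ2 : 1 ≤ 2 * ν + 1 := by linarith
  have e2 : 2 * (ν + 1) - 1 = 2 * ν + 1 := by ring
  have e3 : ν + 1 - 1 / 2 = ν + 1 / 2 := by ring
  have hsm := besselCoeff_summable hβ2
  have hb := hm.bound (fun k => besselCoeff (2 * ν + 1) k * 4 ^ k)
    (fun y hy => by
      refine (hsm (4 * y) (by positivity)).congr fun k => ?_
      rw [abs_mul, mul_pow, abs_of_nonneg (by positivity : (0:ℝ) ≤ 4 ^ k)]; ring)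
    (Real.Gamma (2 * ν + 1) * 4 ^ (-ν))
    (fun y hy => by
      have := h (4 * y) (by positivity)
      rw [Real.mul_rpow (by norm_num) hy.le] at this
      have e : 2 * ν / 2 = ν := by ring
      rw [e] at this
      simp only [mul_pow, ← mul_assoc] at this
      exact this) x hx
  have hsq : (∑' k, besselCoeff (ν + 1) k * x ^ k) ^ 2
      = ∑' k : ℕ, besselCoeff (2 * ν + 1) k * 4 ^ k *
        (Real.Gamma (ν + 1 / 2 + k) * Real.Gamma (ν + 1) /
          (Real.Gamma (ν + 1 + k) * Real.Gamma (ν + 1 / 2))) * x ^ k := by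
    have hs : Summable fun k => ‖besselCoeff (ν + 1) k * x ^ k‖ := by
      simpa [abs_mul, abs_of_pos hx] using besselCoeff_summable hβ x hx.le
    rw [sq, tsum_mul_tsum_eq_tsum_sum_antidiagonal_of_summable_norm hs hs]
    congr 1; ext k
    rw [Gamma_ratio_nat (by linarith) (by linarith)]
    have := besselCoeff_antidiagonal hβ k
    rw [e2, e3] at this
    rw [← this, Finset.sum_mul]
    refine Finset.sum_congr rfl fun ij hij => ?_
    rw [← Finset.HasAntidiagonal.mem_antidiagonal.1 hij, pow_add]; ring
  rw [← hsq] at hb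
  have hG := Real.Gamma_mul_Gamma_add_half (ν + 1 / 2)
  have e5 : ν + 1 / 2 + 1 / 2 = ν + 1 := by ring
  have e6 : 2 * (ν + 1 / 2) = 2 * ν + 1 := by ring
  have e7 : ν + 1 / 2 + -ν = 1 / 2 := by ring
  have e8 : ν + 1 + -ν = 1 := by ring
  have e9 : 1 - (2 * ν + 1) = 2 * -ν := by ring
  have hg : 0 < Real.Gamma (ν + 1 / 2) := Real.Gamma_pos_of_pos (by linarith)
  have hg1 : 0 < Real.Gamma (ν + 1) := Real.Gamma_pos_of_pos (by linarith)
  rw [e5, e6, e9, Real.rpow_mul (by norm_num : (0:ℝ) ≤ 2)] at hG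
  have e10 : (2:ℝ) ^ (2:ℝ) = 4 := by norm_num
  rw [e10] at hG
  rw [e7, e8, Real.Gamma_one, Real.Gamma_one_half_eq, abs_pow] at hb
  refine (sq_le_sq₀ (abs_nonneg _) (by positivity)).1 (hb.trans_eq ?_)
  have e11 : x ^ (-ν) = (x ^ (-(ν / 2))) ^ 2 := by
    rw [← Real.rpow_natCast, ← Real.rpow_mul hx.le]; congr 1; push_cast; ring
  rw [e11]
  have e12 : Real.Gamma (2 * ν + 1) * 4 ^ (-ν) *
      (√Real.pi * Real.Gamma (ν + 1) / (1 * Real.Gamma (ν + 1 / 2)))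
      = (Real.Gamma (2 * ν + 1) * 4 ^ (-ν) * √Real.pi) * Real.Gamma (ν + 1)
        / Real.Gamma (ν + 1 / 2) := by
    rw [one_mul]; ring
  rw [e12, ← hG]
  field_simp

lemma integral_exp_int (m : ℤ) :
    ∫ θ in (0:ℝ)..(2 * Real.pi), Complex.exp ((m * Complex.I) * θ)
      = if m = 0 then (2 * Real.pi : ℂ) else 0 := by
  split_ifs with h
  · simp [h]
  · rw [integral_exp_mul_complex (by simp [h])]
    have : (m * Complex.I) * ((2 * Real.pi : ℝ) : ℂ) = m * (2 * Real.pi * Complex.I) := by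
      push_cast; ring
    rw [this, Complex.exp_int_mul_two_pi_mul_I]
    simp

lemma hasSum_exp_mul_exp (z w : ℂ) :
    HasSum (fun q : ℕ × ℕ => z ^ q.1 / (q.1.factorial : ℂ) * (w ^ q.2 / (q.2.factorial : ℂ)))
      (Complex.exp z * Complex.exp w) := by
  have h : ∀ y : ℂ, HasSum (fun n : ℕ => y ^ n / (n.factorial : ℂ)) (Complex.exp y) := fun y => by
    rw [Complex.exp_eq_exp_ℂ]
    exact NormedSpace.expSeries_div_hasSum_exp y
  have hs : ∀ y : ℂ, Summable fun n : ℕ => ‖y ^ n / (n.factorial : ℂ)‖ := fun y => by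
    simpa using Real.summable_pow_div_factorial ‖y‖
  have hp : Summable fun q : ℕ × ℕ =>
      z ^ q.1 / (q.1.factorial : ℂ) * (w ^ q.2 / (q.2.factorial : ℂ)) :=
    summable_mul_of_summable_norm (f := fun n : ℕ => z ^ n / (n.factorial : ℂ))
      (g := fun n : ℕ => w ^ n / (n.factorial : ℂ)) (hs z) (hs w)
  have ht := tsum_mul_tsum_of_summable_norm (hs z) (hs w)
  rw [(h z).tsum_eq, (h w).tsum_eq] at ht
  rw [ht]
  exact hp.hasSum

/-- The sum is `J_n(2u)`, the `n`-th Fourier coefficient of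
`exp(2 i u sin θ) = exp(u e^(iθ)) exp(-u e^(-iθ))`, which has modulus one. -/
lemma abs_bessel_int_le_one (n : ℕ) (u : ℝ) :
    |∑' k : ℕ, u ^ (n + k) / ((n + k).factorial : ℝ) * ((-u) ^ k / (k.factorial : ℝ))| ≤ 1 := by
  let A : ℕ × ℕ → ℂ := fun q =>
    (u : ℂ) ^ q.1 / (q.1.factorial : ℂ) * ((-u : ℂ) ^ q.2 / (q.2.factorial : ℂ))
  let m : ℕ × ℕ → ℤ := fun q => (q.1 : ℤ) - q.2 - n
  let F : ℕ × ℕ → ℝ → ℂ := fun q θ => A q * Complex.exp ((m q * Complex.I) * θ)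
  have hexp : ∀ (k : ℤ) (θ : ℝ), ‖Complex.exp ((k * Complex.I) * θ)‖ = 1 := by
    intro k θ
    have : (k * Complex.I) * (θ : ℂ) = ((k * θ : ℝ) : ℂ) * Complex.I := by push_cast; ring
    rw [this, Complex.norm_exp_ofReal_mul_I]
  have hA : Summable fun q => ‖A q‖ := by
    have h := Real.summable_pow_div_factorial |u|
    refine (h.mul_of_nonneg h (fun k => by positivity) (fun k => by positivity)).congr fun q => ?_
    simp [A]
  have hsum : HasSum (fun q => ∫ θ in (0:ℝ)..(2 * Real.pi), F q θ)
      (∫ θ in (0:ℝ)..(2 * Real.pi), ∑' q, F q θ) := by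
    simp only [intervalIntegral.integral_of_le Real.two_pi_pos.le]
    refine MeasureTheory.hasSum_integral_of_summable_integral_norm (fun q => ?_) ?_
    · have hc : Continuous (F q) := by simp only [F]; fun_prop
      exact (hc.intervalIntegrable 0 (2 * Real.pi)).1
    · simp only [F, norm_mul, hexp, mul_one, MeasureTheory.integral_const]
      exact hA.mul_left _
  have htsum : ∀ θ : ℝ, ‖∑' q, F q θ‖ = 1 := by
    intro θ
    set z := Complex.exp (θ * Complex.I) with hz
    set w := Complex.exp (-(θ * Complex.I)) with hw
    have h3 := hasSum_exp_mul_exp ((u : ℂ) * z) ((-u : ℂ) * w)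
    have h4 := h3.mul_right (Complex.exp (-(n * (θ * Complex.I))))
    have e : ∀ q, F q θ = ((u : ℂ) * z) ^ q.1 / (q.1.factorial : ℂ) *
        (((-u : ℂ) * w) ^ q.2 / (q.2.factorial : ℂ)) *
        Complex.exp (-(n * (θ * Complex.I))) := by
      intro q
      have : Complex.exp ((m q * Complex.I) * θ)
          = z ^ q.1 * w ^ q.2 * Complex.exp (-(n * (θ * Complex.I))) := by
        rw [hz, hw, ← Complex.exp_nat_mul, ← Complex.exp_nat_mul, ← Complex.exp_add,
          ← Complex.exp_add]
        congr 1
        simp only [m]; push_cast; ring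
      simp only [F, A]
      rw [this, mul_pow, mul_pow]; ring
    rw [tsum_congr e, h4.tsum_eq, ← Complex.exp_add, ← Complex.exp_add]
    have e2 : (u : ℂ) * z + (-u : ℂ) * w + -(n * (θ * Complex.I))
        = ((2 * u * Real.sin θ - n * θ : ℝ) : ℂ) * Complex.I := by
      rw [hz, hw, ← neg_mul, Complex.exp_mul_I, Complex.exp_mul_I, Complex.cos_neg,
        Complex.sin_neg]
      push_cast; ring
    rw [e2, Complex.norm_exp_ofReal_mul_I]
  have hnorm : ‖∫ θ in (0:ℝ)..(2 * Real.pi), ∑' q, F q θ‖ ≤ 2 * Real.pi := by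
    have := intervalIntegral.norm_integral_le_of_norm_le_const (a := 0) (b := 2 * Real.pi)
      (C := 1) (f := fun θ => ∑' q, F q θ) (fun θ _ => (htsum θ).le)
    simpa [abs_of_pos Real.pi_pos] using this
  have hval : ∀ q, ∫ θ in (0:ℝ)..(2 * Real.pi), F q θ
      = if m q = 0 then 2 * Real.pi * A q else 0 := by
    intro q
    simp only [F]
    rw [intervalIntegral.integral_const_mul, integral_exp_int]
    split_ifs <;> ring
  have hinj : Function.Injective (fun k : ℕ => ((n + k, k) : ℕ × ℕ)) := fun k l h =>
    (Prod.ext_iff.1 h).2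
  have hsupp : Function.support (fun q => ∫ θ in (0:ℝ)..(2 * Real.pi), F q θ)
      ⊆ Set.range (fun k : ℕ => ((n + k, k) : ℕ × ℕ)) := by
    intro q hq
    rw [Function.mem_support, hval] at hq
    have hm : m q = 0 := by
      by_contra h
      simp [h] at hq
    refine ⟨q.2, Prod.ext ?_ rfl⟩
    simp only [m] at hm
    simp only
    omega
  have hk := hinj.tsum_eq hsupp
  rw [hsum.tsum_eq] at hk
  have e3 : ∀ k : ℕ, ∫ θ in (0:ℝ)..(2 * Real.pi), F (n + k, k) θ
      = ((2 * Real.pi * (u ^ (n + k) / ((n + k).factorial : ℝ) *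
          ((-u) ^ k / (k.factorial : ℝ))) : ℝ) : ℂ) := by
    intro k
    rw [hval, if_pos (by simp [m])]
    simp [A]
  simp only [e3] at hk
  rw [← Complex.ofReal_tsum, tsum_mul_left] at hk
  rw [← hk, Complex.norm_real, norm_mul, Real.norm_eq_abs, Real.norm_eq_abs,
    abs_of_pos Real.two_pi_pos] at hnorm
  have := Real.two_pi_pos
  by_contra! hcon
  nlinarith

lemma besselBound_nat (n : ℕ) : BesselBound n := by
  intro x hx
  have h := abs_bessel_int_le_one n (√x)
  have hs : 0 < √x := Real.sqrt_pos.2 hx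
  have hG : Real.Gamma ((n : ℝ) + 1) = n.factorial := Real.Gamma_nat_eq_factorial n
  have hn : (0:ℝ) < n.factorial := by exact_mod_cast n.factorial_pos
  have e : ∑' k : ℕ, √x ^ (n + k) / ((n + k).factorial : ℝ) * ((-√x) ^ k / (k.factorial : ℝ))
      = √x ^ n / n.factorial * ∑' k, besselCoeff ((n : ℝ) + 1) k * x ^ k := by
    rw [← tsum_mul_left]
    congr 1; ext k
    have h1 : ((n + k).factorial : ℝ) = risingFactorial ((n : ℝ) + 1) k * n.factorial := by
      rw [← hG, ← Gamma_add_nat (by positivity), ← Real.Gamma_nat_eq_factorial]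
      congr 1; push_cast; ring
    have h2 : x ^ k = √x ^ k * √x ^ k := by rw [← mul_pow, Real.mul_self_sqrt hx.le]
    have h3 := risingFactorial_pos (by positivity : (0:ℝ) < n + 1) k
    rw [h1, h2, besselCoeff, pow_add, neg_pow √x]
    field_simp
  have e2 : x ^ (-((n : ℝ) / 2)) = (√x ^ n)⁻¹ := by
    rw [Real.sqrt_eq_rpow, ← Real.rpow_natCast, ← Real.rpow_mul hx.le, ← Real.rpow_neg hx.le]
    congr 1; ring
  rw [e, abs_mul, abs_of_pos (by positivity)] at h
  rw [hG, e2]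
  calc _ = (√x ^ n / n.factorial * |∑' k, besselCoeff ((n : ℝ) + 1) k * x ^ k|)
        * (n.factorial * (√x ^ n)⁻¹) := by field_simp
    _ ≤ 1 * (n.factorial * (√x ^ n)⁻¹) := mul_le_mul_of_nonneg_right h (by positivity)
    _ = _ := one_mul _

lemma besselBound_dyadic (m : ℕ) : ∀ n : ℕ, BesselBound ((n : ℝ) / 2 ^ m) := by
  induction m with
  | zero => intro n; simpa using besselBound_nat n
  | succ m ih =>
    intro n
    refine BesselBound.half (by positivity) ?_
    have : 2 * ((n : ℝ) / 2 ^ (m + 1)) = n / 2 ^ m := by rw [pow_succ]; field_simp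
    rw [this]; exact ih n

/-- The case of dyadic rationals extends to every `ν ≥ 0` by continuity in `ν`. -/
lemma besselBound {ν : ℝ} (hν : 0 ≤ ν) : BesselBound ν := by
  intro x hx
  let d : ℕ → ℝ := fun m => (⌊ν * 2 ^ m⌋₊ : ℝ) / 2 ^ m
  have hd0 : ∀ m, 0 ≤ d m := fun m => by positivity
  have hd : Filter.Tendsto d Filter.atTop (nhds ν) :=
    (tendsto_nat_floor_mul_div_atTop hν).comp
      (tendsto_pow_atTop_atTop_of_one_lt (one_lt_two : (1:ℝ) < 2))
  have hd1 : Filter.Tendsto (fun m => d m + 1) Filter.atTop (nhds (ν + 1)) := hd.add_const 1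
  have hlhs : Filter.Tendsto (fun m => ∑' k, besselCoeff (d m + 1) k * x ^ k) Filter.atTop
      (nhds (∑' k, besselCoeff (ν + 1) k * x ^ k)) := by
    refine tendsto_tsum_of_dominated_convergence (Real.summable_pow_div_factorial x)
      (fun k => Filter.Tendsto.mul_const _ ?_) (Filter.Eventually.of_forall fun m k => ?_)
    · have hf : (0:ℝ) < k.factorial := by exact_mod_cast k.factorial_pos
      refine Filter.Tendsto.div tendsto_const_nhds (Filter.Tendsto.mul_const _ ?_)
        (mul_pos (risingFactorial_pos (by linarith) k) hf).ne'
      exact tendsto_finsetProd _ fun i _ => hd1.add_const _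
    · rw [norm_mul, Real.norm_eq_abs, Real.norm_eq_abs, abs_of_pos (by positivity : 0 < x ^ k)]
      calc _ ≤ 1 / (k.factorial : ℝ) * x ^ k :=
            mul_le_mul_of_nonneg_right
              (abs_besselCoeff_le (by linarith [hd0 m]) k) (by positivity)
        _ = _ := by ring
  have hrhs : Filter.Tendsto (fun m => Real.Gamma (d m + 1) * x ^ (-(d m / 2))) Filter.atTop
      (nhds (Real.Gamma (ν + 1) * x ^ (-(ν / 2)))) := by
    refine Filter.Tendsto.mul ?_ ?_
    · have hc : ContinuousAt Real.Gamma (ν + 1) :=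
        (Real.differentiableAt_Gamma fun m => by
          have : (0:ℝ) ≤ m := m.cast_nonneg
          linarith).continuousAt
      exact hc.tendsto.comp hd1
    · exact (Real.continuousAt_const_rpow hx.ne').tendsto.comp (hd.div_const 2).neg
  exact le_of_tendsto_of_tendsto' hlhs.abs hrhs fun m => besselBound_dyadic m _ x hx

/-! ### The hypergeometric bound -/

/-- Bessel-function bound for the Bessel-type hypergeometric function:
under the stated conditions (some `b_j ≥ 1`, all `a_i > (b_j+1)/2`, and `b_[j] ≺^W a`),
for all `x > 0`,
`|p-1Fp(a;b;-x)| ≤ x^((1-b_j)/2) · ∏Γ(b_i) · ∏Γ(a_i-(b_j-1)/2) / (∏_{i≠j}Γ(b_i-(b_j-1)/2) · ∏Γ(a_i))`. -/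
theorem pminus1Fp_bessel_bound
    (p : ℕ) (a : Fin p → ℝ) (b : Fin (p + 1) → ℝ)
    (ha : ∀ i, 0 < a i) (hb : ∀ j, 0 < b j)
    (j : Fin (p + 1))
    (hbj : 1 ≤ b j)
    (haj : ∀ i, (b j + 1) / 2 < a i)
    (hmaj : WeaklySupermajorizedBy (b ∘ j.succAbove) a) :
    ∀ x : ℝ, 0 < x →
      |pFq a b (-x)| ≤
        x ^ ((1 - b j) / 2) * (∏ i, Real.Gamma (b i)) *
          (∏ i, Real.Gamma (a i - (b j - 1) / 2)) /
          ((∏ i : Fin p, Real.Gamma (b (j.succAbove i) - (b j - 1) / 2)) *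
            ∏ i, Real.Gamma (a i)) := by
  intro x hx
  set σ : ℝ := (b j - 1) / 2 with hσdef
  have hσ : 0 ≤ σ := by rw [hσdef]; linarith
  obtain ⟨-, -, hmaj⟩ := hmaj
  set b' : Fin p → ℝ := b ∘ j.succAbove with hb'
  let s := Tuple.sort a
  let t := Tuple.sort b'
  have haσ : ∀ i, σ < a i := fun i => by have := haj i; rw [hσdef]; linarith
  have hs := hmaj s t (Tuple.monotone_sort a) (Tuple.monotone_sort b')
  have hbσ : ∀ i, σ < (b' ∘ t) i := by
    intro i
    let z : Fin p := ⟨0, i.pos⟩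
    have hz : Finset.univ.filter (· ≤ z) = {z} := by
      ext l
      simp only [Finset.mem_filter, Finset.mem_univ, true_and, Finset.mem_singleton, z,
        Fin.le_def, Fin.ext_iff, nonpos_iff_eq_zero]
    -- the smallest entry of `b'` is at least the smallest entry of `a`
    have h0 := hs z
    rw [hz, Finset.sum_singleton, Finset.sum_singleton] at h0
    have h1 : (b' ∘ t) z ≤ (b' ∘ t) i := Tuple.monotone_sort b' (Nat.zero_le _)
    exact ((haσ _).trans_le h0).trans_le h1
  have hm := isMellinMultiplier_gamma hσ (a ∘ s) (b' ∘ t) (Tuple.monotone_sort b')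
    (fun i => haσ _) hbσ hs
  have hperm : ∀ y : ℝ, ∏ i, Real.Gamma ((a ∘ s) i + y) * Real.Gamma ((b' ∘ t) i) /
        (Real.Gamma ((b' ∘ t) i + y) * Real.Gamma ((a ∘ s) i))
      = (∏ i, Real.Gamma (a i + y)) * (∏ i, Real.Gamma (b' i)) /
        ((∏ i, Real.Gamma (b' i + y)) * ∏ i, Real.Gamma (a i)) := by
    intro y
    rw [Finset.prod_div_distrib, Finset.prod_mul_distrib, Finset.prod_mul_distrib]
    simp only [Function.comp_apply]
    rw [Equiv.prod_comp s fun i => Real.Gamma (a i + y), Equiv.prod_comp s fun i => Real.Gamma (a i),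
      Equiv.prod_comp t fun i => Real.Gamma (b' i + y), Equiv.prod_comp t fun i => Real.Gamma (b' i)]
  have hbound := hm.bound (besselCoeff (b j)) (besselCoeff_summable hbj) (Real.Gamma (b j))
    (fun y hy => by
      have := besselBound (ν := b j - 1) (by linarith) y hy
      rwa [sub_add_cancel] at this) x hx
  have hseries : pFq a b (-x) = ∑' k : ℕ, besselCoeff (b j) k *
      (∏ i, Real.Gamma ((a ∘ s) i + k) * Real.Gamma ((b' ∘ t) i) /
        (Real.Gamma ((b' ∘ t) i + k) * Real.Gamma ((a ∘ s) i))) * x ^ k := by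
    unfold pFq
    have hb'pos : ∀ i, 0 < b' i := fun i => hb (j.succAbove i)
    congr 1; ext k
    rw [hperm, ← Finset.prod_mul_distrib, ← Finset.prod_mul_distrib, ← Finset.prod_div_distrib,
      Finset.prod_congr rfl fun i _ => Gamma_ratio_nat (ha i) (hb'pos i) k,
      Finset.prod_div_distrib, Fin.prod_univ_succAbove _ j, besselCoeff, neg_pow x]
    simp only [hb', Function.comp_apply]
    have h1 := risingFactorial_pos (hb j) k
    have h2 : 0 < ∏ i, risingFactorial (b (j.succAbove i)) k :=
      Finset.prod_pos fun i _ => risingFactorial_pos (hb _) k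
    field_simp
  rw [hseries]
  refine hbound.trans_eq ?_
  have e : (1 - b j) / 2 = -σ := by rw [hσdef]; ring
  rw [hperm, e, Fin.prod_univ_succAbove (fun i => Real.Gamma (b i)) j]
  simp only [← sub_eq_add_neg, hb', Function.comp_apply]
  ring
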